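/- arXiv:1711.04604 — 2 statements merged into one kernel-verified Lean document; each statement's English description precedes it below -/
import Mathlib

section
/- Every minimal blocking set of a d-quasi-forest has size at most d + 2. -/
attribute [local instance] Classical.propDecidable

namespace VCKernel

variable {V : Type*} [Fintype V] [DecidableEq V]

/-- `S` is an independent set of `G`. -/
def IsIndep (G : SimpleGraph V) (S : Finset V) : Prop :=
  ∀ u ∈ S, ∀ v ∈ S, ¬ G.Adj u v

/-- Independence number of the subgraph of `G` induced on the vertex set `A`. -/
noncomputable def alphaOn (G : SimpleGraph V) (A : Set V) : ℕ :=
  sSup {n | ∃ S : Finset V, ↑S ⊆ A ∧ IsIndep G S ∧ S.card = n}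

/-- Independence number `α(G)`. -/
noncomputable def alpha (G : SimpleGraph V) : ℕ := alphaOn G Set.univ

/-- `Y` is a blocking set: deleting it decreases the independence number. -/
def IsBlocking (G : SimpleGraph V) (Y : Finset V) : Prop :=
  alphaOn G (Set.univ \ ↑Y) < alpha G

/-- `Y` is a minimal blocking set. -/
def IsMinBlocking (G : SimpleGraph V) (Y : Finset V) : Prop :=
  IsBlocking G Y ∧ ∀ Y' ⊂ Y, ¬ IsBlocking G Y'

/-- Open neighborhood of the vertex set `X'` in `G`. -/
def nbhd (G : SimpleGraph V) (X' : Finset V) : Set V :=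
  {v | ∃ u ∈ X', G.Adj u v}

/-- Number of conflicts induced by `X'` on the induced subgraph with vertex set `A`. -/
noncomputable def conf (G : SimpleGraph V) (A : Set V) (X' : Finset V) : ℕ :=
  alphaOn G A - alphaOn G (A \ nbhd G X')

/-- `C` is (the vertex set of) a connected component of the subgraph of `G`
induced on `A`. -/
def IsCompOf (G : SimpleGraph V) (A C : Set V) : Prop :=
  C ⊆ A ∧ (G.induce C).Connected ∧ ∀ u ∈ C, ∀ v ∈ A, G.Adj u v → v ∈ C

/-- Feasible solution to the Independent Set LP of the subgraph induced on `A`. -/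
def FeasISOn (G : SimpleGraph V) (A : Set V) (x : V → ℝ) : Prop :=
  (∀ v ∈ A, 0 ≤ x v ∧ x v ≤ 1) ∧
    ∀ u ∈ A, ∀ v ∈ A, G.Adj u v → x u + x v ≤ 1

/-- Half-integrality on `A`. -/
def HalfIntOn (A : Set V) (x : V → ℝ) : Prop :=
  ∀ v ∈ A, x v = 0 ∨ x v = 1/2 ∨ x v = 1

/-- Objective value of an LP solution on vertex set `A`. -/
noncomputable def weightOn (A : Set V) (x : V → ℝ) : ℝ :=
  ∑ v, if v ∈ A then x v else 0

/-- `x` is an optimum half-integral solution to the Independent Set LP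
of the subgraph induced on `A`. -/
def OptHIOn (G : SimpleGraph V) (A : Set V) (x : V → ℝ) : Prop :=
  FeasISOn G A x ∧ HalfIntOn A x ∧
    ∀ y : V → ℝ, FeasISOn G A y → HalfIntOn A y → weightOn A y ≤ weightOn A x

/-- Feasible solution to the Vertex Cover LP of `G`. -/
def FeasVC (G : SimpleGraph V) (x : V → ℝ) : Prop :=
  (∀ v, 0 ≤ x v ∧ x v ≤ 1) ∧ ∀ u v, G.Adj u v → 1 ≤ x u + x v

/-- Optimum value of the Independent Set LP of `G`. -/
noncomputable def lpIS (G : SimpleGraph V) : ℝ :=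
  sSup {w | ∃ x : V → ℝ, FeasISOn G Set.univ x ∧ w = ∑ v, x v}

/-- Optimum value of the Vertex Cover LP of `G`. -/
noncomputable def lpVC (G : SimpleGraph V) : ℝ :=
  sInf {w | ∃ x : V → ℝ, FeasVC G x ∧ w = ∑ v, x v}

/-- `C` is a vertex cover of `G`. -/
def IsVC (G : SimpleGraph V) (C : Finset V) : Prop :=
  ∀ u v, G.Adj u v → u ∈ C ∨ v ∈ C

/-- Vertex cover number of `G`. -/
noncomputable def vcNum (G : SimpleGraph V) : ℕ :=
  sInf {n | ∃ C : Finset V, IsVC G C ∧ C.card = n}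

/-- `Z` is a feedback vertex set of `G`. -/
def IsFVS (G : SimpleGraph V) (Z : Finset V) : Prop :=
  (G.induce ((↑Z : Set V)ᶜ)).IsAcyclic

/-- `Z` is an odd cycle transversal of `G`. -/
def IsOCT (G : SimpleGraph V) (Z : Finset V) : Prop :=
  (G.induce ((↑Z : Set V)ᶜ)).Colorable 2

/-- `G` is a `d`-quasi-forest: each connected component has a feedback
vertex set of size at most `d`. -/
def QuasiForest (G : SimpleGraph V) (d : ℕ) : Prop :=
  ∀ C : Set V, IsCompOf G Set.univ C →
    ∃ Z : Finset V, Z.card ≤ d ∧ (G.induce (C \ ↑Z)).IsAcyclic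

/-- `G` is `d`-quasi-bipartite: each connected component has an odd cycle
transversal of size at most `d`. -/
def QuasiBipartite (G : SimpleGraph V) (d : ℕ) : Prop :=
  ∀ C : Set V, IsCompOf G Set.univ C →
    ∃ Z : Finset V, Z.card ≤ d ∧ (G.induce (C \ ↑Z)).Colorable 2

/-- Feedback vertex set number of `G`. -/
noncomputable def fvsNum (G : SimpleGraph V) : ℕ :=
  sInf {n | ∃ Z : Finset V, IsFVS G Z ∧ Z.card = n}

/-- Odd cycle transversal number of `G`. -/
noncomputable def octNum (G : SimpleGraph V) : ℕ :=
  sInf {n | ∃ Z : Finset V, IsOCT G Z ∧ Z.card = n}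

/-- The subgraph of `G` induced on `A` has treedepth at most `k`
(elimination-forest characterization of treedepth). -/
def tdLE (G : SimpleGraph V) : ℕ → Set V → Prop
  | 0, A => A = ∅
  | (k+1), A => ∀ C : Set V, IsCompOf G A C → ∃ v ∈ C, tdLE G k (C \ {v})

theorem card_le_alphaOn (G : SimpleGraph V) {A : Set V} {S : Finset V} (h : (S : Set V) ⊆ A)
    (hi : IsIndep G S) : S.card ≤ alphaOn G A := by
  refine le_csSup ⟨Fintype.card V, ?_⟩ ⟨S, h, hi, rfl⟩
  rintro n ⟨T, -, -, rfl⟩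
  exact Finset.card_le_univ T

theorem exists_alphaOn (G : SimpleGraph V) (A : Set V) :
    ∃ S : Finset V, (S : Set V) ⊆ A ∧ IsIndep G S ∧ S.card = alphaOn G A := by
  have := Nat.sSup_mem (s := {n | ∃ S : Finset V, ↑S ⊆ A ∧ IsIndep G S ∧ S.card = n})
    ⟨0, ∅, by simp, by simp [IsIndep], by simp⟩
    ⟨Fintype.card V, by rintro n ⟨T, -, -, rfl⟩; exact Finset.card_le_univ T⟩
  exact this

/-- A pair of vertex sets without edges in between (a doubled half-integral LP solution). -/
def PP (G : SimpleGraph V) (X : Set V) (A B : Finset V) : Prop :=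
  (∀ a ∈ A, a ∈ X) ∧ (∀ b ∈ B, b ∈ X) ∧ ∀ a ∈ A, ∀ b ∈ B, ¬ G.Adj a b

theorem PP.symm {G : SimpleGraph V} {X : Set V} {A B : Finset V} (h : PP G X A B) :
    PP G X B A :=
  ⟨h.2.1, h.1, fun a ha b hb hab => h.2.2 b hb a ha hab.symm⟩

theorem PP.mono {G : SimpleGraph V} {X X' : Set V} {A B : Finset V} (h : PP G X A B)
    (hX : X ⊆ X') : PP G X' A B :=
  ⟨fun a ha => hX (h.1 a ha), fun a ha => hX (h.2.1 a ha), h.2.2⟩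

theorem PP.join {G : SimpleGraph V} {X : Set V} {A B C D : Finset V} (h : PP G X A B)
    (h' : PP G X C D) : PP G X (A ∪ C) (B ∩ D) := by
  obtain ⟨h1, h2, h3⟩ := h
  obtain ⟨h4, h5, h6⟩ := h'
  refine ⟨?_, ?_, ?_⟩ <;> grind

theorem PP.meet {G : SimpleGraph V} {X : Set V} {A B C D : Finset V} (h : PP G X A B)
    (h' : PP G X C D) : PP G X (A ∩ C) (B ∪ D) := (h.symm.join h'.symm).symm

theorem step (G : SimpleGraph V) (X : Set V) (Y : Finset V) (k : ℕ)
    (hb : ∀ A B, PP G X A B → A.card + B.card ≤ k)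
    (h0 : ∃ A B, PP G X A B ∧ k ≤ A.card + B.card)
    (h1 : ∀ y ∈ Y, ∃ A B, PP G (X \ ↑({y} : Finset V)) A B ∧ k ≤ A.card + B.card)
    (h2 : ∀ y ∈ Y, ∀ z ∈ Y, y ≠ z →
      ∃ A B, PP G (X \ ↑({y, z} : Finset V)) A B ∧ k ≤ A.card + B.card + 1) :
    ∃ A B, PP G (X \ ↑Y) A B ∧ k ≤ A.card + B.card := by
  have sub : ∀ T : Finset V, X \ ↑T ⊆ X := fun T => Set.sdiff_subset
  have key : ∀ y ∈ Y, ∀ z ∈ Y, ∃ A B, PP G X A B ∧ k ≤ A.card + B.card ∧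
      y ∉ A ∧ y ∉ B ∧ z ∉ A := by
    intro y hy z hz
    obtain ⟨A0, B0, p0, c0⟩ := h1 y hy
    have ya : y ∉ A0 := fun h => by simpa using (p0.1 y h).2
    have yb : y ∉ B0 := fun h => by simpa using (p0.2.1 y h).2
    have p0' := p0.mono (sub _)
    by_cases hyz : y = z
    · subst hyz
      exact ⟨A0, B0, p0', c0, ya, yb, ya⟩
    obtain ⟨A, B, p, c⟩ := h2 y hy z hz hyz
    have p' := p.mono (sub _)
    have ya' : y ∉ A := fun h => by simpa using (p.1 y h).2
    have yb' : y ∉ B := fun h => by simpa using (p.2.1 y h).2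
    have za' : z ∉ A := fun h => by simpa using (p.1 z h).2
    have zb' : z ∉ B := fun h => by simpa using (p.2.1 z h).2
    have e1 := Finset.card_union_add_card_inter A A0
    have e2 := Finset.card_union_add_card_inter B B0
    by_cases hc : k ≤ (A ∪ A0).card + (B ∩ B0).card
    · refine ⟨B ∩ B0, A ∪ A0, (p'.join p0').symm, by omega, ?_, ?_, ?_⟩ <;> grind
    · refine ⟨A ∩ A0, B ∪ B0, p'.meet p0', by omega, ?_, ?_, ?_⟩ <;> grind
  have key2 : ∀ y ∈ Y, ∀ T : Finset V, T ⊆ Y → ∃ A B, PP G X A B ∧ k ≤ A.card + B.card ∧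
      y ∉ A ∧ y ∉ B ∧ ∀ z ∈ T, z ∉ A := by
    intro y hy T
    induction T using Finset.induction_on with
    | empty =>
      intro _
      obtain ⟨A, B, a, b, c, d, -⟩ := key y hy y hy
      exact ⟨A, B, a, b, c, d, by simp⟩
    | insert z T hz ih =>
      intro hT
      obtain ⟨A, B, p, c, a1, a2, a3⟩ := ih (fun t ht => hT (Finset.mem_insert_of_mem ht))
      obtain ⟨A', B', p', c', a1', a2', a3'⟩ := key y hy z (hT (Finset.mem_insert_self _ _))
      have e1 := Finset.card_union_add_card_inter A A'
      have e2 := Finset.card_union_add_card_inter B B'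
      have e3 := hb _ _ (p.join p')
      refine ⟨A ∩ A', B ∪ B', p.meet p', by omega, ?_, ?_, ?_⟩ <;> grind
  have key3 : ∀ T : Finset V, T ⊆ Y → ∃ A B, PP G X A B ∧ k ≤ A.card + B.card ∧
      (∀ z ∈ Y, z ∉ A) ∧ ∀ z ∈ T, z ∉ B := by
    intro T
    induction T using Finset.induction_on with
    | empty =>
      intro _
      rcases Y.eq_empty_or_nonempty with rfl | ⟨y, hy⟩
      · obtain ⟨A, B, p, c⟩ := h0
        exact ⟨A, B, p, c, by simp, by simp⟩
      · obtain ⟨A, B, a, b, c, d, e⟩ := key2 y hy Y subset_rfl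
        exact ⟨A, B, a, b, e, by simp⟩
    | insert z T hz ih =>
      intro hT
      obtain ⟨A, B, p, c, a1, a2⟩ := ih (fun t ht => hT (Finset.mem_insert_of_mem ht))
      obtain ⟨A', B', p', c', a1', a2', a3'⟩ :=
        key2 z (hT (Finset.mem_insert_self _ _)) Y subset_rfl
      have e1 := Finset.card_union_add_card_inter A A'
      have e2 := Finset.card_union_add_card_inter B B'
      have e3 := hb _ _ (p.meet p')
      refine ⟨A ∪ A', B ∩ B', p.join p', by omega, ?_, ?_⟩ <;> grind
  obtain ⟨A, B, p, c, a, b⟩ := key3 Y subset_rfl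
  exact ⟨A, B, ⟨fun x hx => ⟨p.1 x hx, fun h => a x h hx⟩,
    fun x hx => ⟨p.2.1 x hx, fun h => b x h hx⟩, p.2.2⟩, c⟩

theorem lp_drop (G : SimpleGraph V) (X : Set V) (Y : Finset V) (k : ℕ)
    (hb : ∀ A B, PP G X A B → A.card + B.card ≤ k)
    (h : ∃ A B, PP G (X \ ↑Y) A B ∧ k ≤ A.card + B.card) :
    alphaOn G X ≤ alphaOn G (X \ ↑Y) := by
  obtain ⟨A0, B0, p0, c0⟩ := h
  obtain ⟨A, B, p, c, hBA⟩ : ∃ A B, PP G (X \ ↑Y) A B ∧ k ≤ A.card + B.card ∧ B ⊆ A := by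
    refine ⟨A0 ∪ B0, B0 ∩ A0, p0.join p0.symm, ?_, by grind⟩
    have := Finset.card_union_add_card_inter A0 B0
    rw [Finset.inter_comm B0]
    omega
  obtain ⟨I, hIX, hI, hc⟩ := exists_alphaOn G X
  have q := hb _ _ ((p.mono Set.sdiff_subset).join ⟨fun a ha => hIX ha, fun a ha => hIX ha, hI⟩)
  have h1 : ((I ∩ A) ∪ B).card ≤ alphaOn G (X \ ↑Y) := by
    apply card_le_alphaOn
    · intro x hx
      have : x ∈ A := by
        have hx' : x ∈ (I ∩ A) ∪ B := hx
        grind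
      exact p.1 x this
    · have := p.2.2
      have := p.symm.2.2
      unfold IsIndep at *
      grind
  have e1 := Finset.card_union_add_card_inter A I
  have e2 := Finset.card_union_add_card_inter (I ∩ A) B
  have e3 : (I ∩ A) ∩ B = B ∩ I := by grind
  rw [e3] at e2
  rw [Finset.inter_comm A I] at e1
  omega

theorem exists_max (G : SimpleGraph V) (X : Set V) :
    ∃ k, (∀ A B, PP G X A B → A.card + B.card ≤ k) ∧
      ∃ A B, PP G X A B ∧ k ≤ A.card + B.card := by
  obtain ⟨p, hp, hm⟩ := Finset.exists_max_image
    (Finset.univ.filter (fun p : Finset V × Finset V => PP G X p.1 p.2))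
    (fun p => p.1.card + p.2.card) ⟨(∅, ∅), Finset.mem_filter.2 ⟨Finset.mem_univ _, by simp [PP]⟩⟩
  refine ⟨p.1.card + p.2.card, fun A B h => hm (A, B) (by simpa using h), p.1, p.2,
    by simpa using hp, le_rfl⟩

theorem core (G : SimpleGraph V) (a : ℕ) : ∀ (m : ℕ) (X : Set V) (Y : Finset V),
    (∀ A B, PP G X A B → A.card + B.card + 2 ≤ 2 * a + m) → alphaOn G (X \ ↑Y) < a →
    ∃ Y' ⊆ Y, Y'.card ≤ m ∧ alphaOn G (X \ ↑Y') < a := by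
  intro m
  induction m using Nat.strong_induction_on with
  | _ m ih =>
  intro X Y hX hY
  by_cases ha : alphaOn G X < a
  · exact ⟨∅, by simp, by simp, by simpa using ha⟩
  push Not at ha
  have hm : 2 ≤ m := by
    obtain ⟨I, hIX, hI, hc⟩ := exists_alphaOn G X
    have := hX I I ⟨fun a ha => hIX ha, fun a ha => hIX ha, hI⟩
    omega
  obtain ⟨k, hb, h0⟩ := exists_max G X
  have hk : k + 2 ≤ 2 * a + m := by
    obtain ⟨A, B, p, c⟩ := h0
    have := hX A B p
    omega
  have hrec : ∀ T : Finset V, T ⊆ Y → 1 ≤ T.card → T.card ≤ m →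
      (∀ A B, PP G (X \ ↑T) A B → A.card + B.card + T.card ≤ k) →
      ∃ Y' ⊆ Y, Y'.card ≤ m ∧ alphaOn G (X \ ↑Y') < a := by
    intro T hT hT1 hTm hd
    obtain ⟨Y2, hY2, hc, hlt⟩ := ih (m - T.card) (by omega) (X \ ↑T) Y
      (fun A B p => by have := hd A B p; omega)
      (by
        have : (X \ ↑T) \ (↑Y : Set V) = X \ ↑Y := by
          rw [Set.diff_diff, Set.union_eq_self_of_subset_left (by exact_mod_cast hT)]
        rwa [this])
    refine ⟨T ∪ Y2, Finset.union_subset hT hY2, ?_, ?_⟩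
    · have := Finset.card_union_le T Y2
      omega
    · rwa [Set.diff_diff, ← Finset.coe_union] at hlt
  by_contra hcon
  have h1 : ∀ y ∈ Y, ∃ A B, PP G (X \ ↑({y} : Finset V)) A B ∧ k ≤ A.card + B.card := by
    intro y hy
    by_contra h
    push Not at h
    exact hcon (hrec {y} (by simpa using hy) (by simp) (by simp; omega)
      (fun A B p => by have := h A B p; simp; omega))
  have h2 : ∀ y ∈ Y, ∀ z ∈ Y, y ≠ z →
      ∃ A B, PP G (X \ ↑({y, z} : Finset V)) A B ∧ k ≤ A.card + B.card + 1 := by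
    intro y hy z hz hyz
    by_contra h
    push Not at h
    have hcard := Finset.card_pair hyz
    exact hcon (hrec {y, z} (by grind) (by omega) (by omega)
      (fun A B p => by have := h A B p; omega))
  have := lp_drop G X Y k hb (step G X Y k hb h0 h1 h2)
  omega

theorem gap (G : SimpleGraph V) (C : Set V) (Z : Finset V)
    (hZ : (G.induce (C \ ↑Z)).IsAcyclic) (A B : Finset V) (p : PP G C A B) :
    A.card + B.card ≤ 2 * alphaOn G C + Z.card := by
  obtain ⟨col⟩ := hZ.colorable_two
  let W (i : Fin 2) : Finset V := (A ∪ B).filter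
    (fun v => v ∉ A ∩ B ∧ ∃ h : v ∈ C \ (↑Z : Set V), col ⟨v, h⟩ = i)
  have hW : ∀ i, (A ∩ B ∪ W i).card ≤ alphaOn G C := by
    intro i
    apply card_le_alphaOn
    · intro x hx
      have hx' : x ∈ A ∩ B ∪ W i := hx
      have : x ∈ A ∨ x ∈ B := by grind
      exact this.elim (p.1 x) (p.2.1 x)
    · intro u hu v hv huv
      have p1 := p.2.2
      have p2 := p.symm.2.2
      by_cases hu' : u ∈ A ∩ B
      · grind
      by_cases hv' : v ∈ A ∩ B
      · have := huv.symm
        grind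
      have hu2 : u ∈ W i := by grind
      have hv2 : v ∈ W i := by grind
      obtain ⟨-, -, h1, e1⟩ := Finset.mem_filter.1 hu2
      obtain ⟨-, -, h2, e2⟩ := Finset.mem_filter.1 hv2
      have hadj : (G.induce (C \ (↑Z : Set V))).Adj ⟨u, h1⟩ ⟨v, h2⟩ := huv
      exact col.valid hadj (e1.trans e2.symm)
  have hd : ∀ i, (A ∩ B ∪ W i).card = (A ∩ B).card + (W i).card := by
    intro i
    apply Finset.card_union_of_disjoint
    rw [Finset.disjoint_left]
    intro x hx hx'
    exact (Finset.mem_filter.1 hx').2.1 hx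
  have hcov : A ∪ B ⊆ (A ∩ B) ∪ (W 0 ∪ W 1 ∪ Z) := by
    intro x hx
    by_cases h1 : x ∈ A ∩ B
    · exact Finset.mem_union_left _ h1
    by_cases h2 : x ∈ Z
    · grind
    have hC : x ∈ C := (Finset.mem_union.1 hx).elim (p.1 x) (p.2.1 x)
    have hx2 : x ∈ C \ (↑Z : Set V) := ⟨hC, h2⟩
    have : ∀ i, col ⟨x, hx2⟩ = i → x ∈ W i := fun i hi =>
      Finset.mem_filter.2 ⟨hx, h1, hx2, hi⟩
    have h01 : col ⟨x, hx2⟩ = 0 ∨ col ⟨x, hx2⟩ = 1 := by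
      generalize col ⟨x, hx2⟩ = i
      revert i
      decide
    rcases h01 with h | h
    · have := this 0 h
      grind
    · have := this 1 h
      grind
  have c1 := Finset.card_le_card hcov
  have c2 := Finset.card_union_le (A ∩ B) (W 0 ∪ W 1 ∪ Z)
  have c3 := Finset.card_union_le (W 0 ∪ W 1) Z
  have c4 := Finset.card_union_le (W 0) (W 1)
  have c5 := Finset.card_union_add_card_inter A B
  have a0 := hW 0
  have a1 := hW 1
  rw [hd] at a0 a1
  omega

theorem blocking_of_comp (G : SimpleGraph V) (C : Set V)
    (hC : ∀ u ∈ C, ∀ v, G.Adj u v → v ∈ C) (Y : Finset V)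
    (h : alphaOn G (C \ ↑Y) < alphaOn G C) : IsBlocking G Y := by
  obtain ⟨S, hS, hSi, hSc⟩ := exists_alphaOn G (Set.univ \ (↑Y : Set V))
  obtain ⟨T, hT, hTi, hTc⟩ := exists_alphaOn G C
  have h1 : (S.filter (· ∈ C)).card ≤ alphaOn G (C \ ↑Y) := by
    apply card_le_alphaOn
    · intro x hx
      have hx' := Finset.mem_filter.1 hx
      exact ⟨hx'.2, (hS hx'.1).2⟩
    · intro u hu v hv
      exact hSi u (Finset.mem_filter.1 hu).1 v (Finset.mem_filter.1 hv).1
  have h2 : (T ∪ S.filter (· ∉ C)).card ≤ alpha G := by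
    apply card_le_alphaOn _ (Set.subset_univ _)
    intro u hu v hv huv
    have hT' : ∀ t ∈ T, t ∈ C := fun t ht => hT ht
    rcases Finset.mem_union.1 hu with hu | hu <;> rcases Finset.mem_union.1 hv with hv | hv
    · exact hTi u hu v hv huv
    · exact (Finset.mem_filter.1 hv).2 (hC u (hT' u hu) v huv)
    · exact (Finset.mem_filter.1 hu).2 (hC v (hT' v hv) u huv.symm)
    · exact hSi u (Finset.mem_filter.1 hu).1 v (Finset.mem_filter.1 hv).1 huv
  rw [Finset.card_union_of_disjoint] at h2
  · have := Finset.card_filter_add_card_filter_not (s := S) (· ∈ C)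
    unfold IsBlocking
    omega
  · rw [Finset.disjoint_left]
    intro x hx hx'
    exact (Finset.mem_filter.1 hx').2 (hT hx)

theorem exists_comp (G : SimpleGraph V) (Y : Finset V) (h : IsBlocking G Y) :
    ∃ c : G.ConnectedComponent, alphaOn G (c.supp \ ↑Y) < alphaOn G c.supp := by
  by_contra hcon
  push Not at hcon
  choose S hS hSi hSc using fun c : G.ConnectedComponent => exists_alphaOn G (c.supp \ ↑Y)
  obtain ⟨I, -, hI, hIc⟩ := exists_alphaOn G (Set.univ : Set V)
  have hmem : ∀ c x, x ∈ S c → G.connectedComponentMk x = c := fun c x hx => (hS c hx).1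
  let U := Finset.univ.biUnion S
  have hU : U.card ≤ alphaOn G (Set.univ \ ↑Y) := by
    apply card_le_alphaOn
    · intro x hx
      obtain ⟨c, -, hc⟩ := Finset.mem_biUnion.1 hx
      exact ⟨trivial, (hS c hc).2⟩
    · intro u hu v hv huv
      obtain ⟨c, -, hc⟩ := Finset.mem_biUnion.1 hu
      obtain ⟨c', -, hc'⟩ := Finset.mem_biUnion.1 hv
      have : c = c' := by
        rw [← hmem c u hc, ← hmem c' v hc']
        exact SimpleGraph.ConnectedComponent.sound huv.reachable
      subst this
      exact hSi c u hc v hc' huv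
  have hUc : U.card = ∑ c, (S c).card := by
    apply Finset.card_biUnion
    intro c _ c' _ hne
    rw [Function.onFun, Finset.disjoint_left]
    intro x hx hx'
    exact hne ((hmem c x hx).symm.trans (hmem c' x hx'))
  have hIs : I.card = ∑ c, (I.filter (fun x => G.connectedComponentMk x = c)).card :=
    Finset.card_eq_sum_card_fiberwise (fun _ _ => Finset.mem_coe.2 (Finset.mem_univ _))
  have hle : I.card ≤ U.card := by
    rw [hIs, hUc]
    apply Finset.sum_le_sum
    intro c _
    rw [hSc]
    refine le_trans (card_le_alphaOn G ?_ ?_) (hcon c)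
    · intro x hx
      exact (Finset.mem_filter.1 hx).2
    · intro u hu v hv
      exact hI u (Finset.mem_filter.1 hu).1 v (Finset.mem_filter.1 hv).1
  unfold IsBlocking alpha at h
  omega

/-- Every minimal blocking set of a `d`-quasi-forest has size at most `d + 2`. -/
theorem stmt6 (G : SimpleGraph V) (d : ℕ) (hG : QuasiForest G d)
    (Y : Finset V) (hY : IsMinBlocking G Y) :
    Y.card ≤ d + 2 := by
  obtain ⟨c, hc⟩ := exists_comp G Y hY.1
  have hcl : ∀ u ∈ c.supp, ∀ v, G.Adj u v → v ∈ c.supp := fun u hu v huv =>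
    (SimpleGraph.ConnectedComponent.sound huv.symm.reachable).trans hu
  obtain ⟨Z, hZd, hZ⟩ := hG c.supp ⟨Set.subset_univ _, c.maximal_connected_induce_supp.prop,
    fun u hu v _ huv => hcl u hu v huv⟩
  obtain ⟨Y', hY', hcard, hlt⟩ := core G (alphaOn G c.supp) (d + 2) c.supp Y
    (fun A B p => by have := gap G c.supp Z hZ A B p; omega) hc
  have hbl := blocking_of_comp G c.supp hcl Y' hlt
  by_cases h : Y' = Y
  · rwa [← h]
  · exact absurd hbl (hY.2 Y' (Finset.ssubset_iff_subset_ne.2 ⟨hY', h⟩))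

end VCKernel
end

section
/- Let G be a graph and X ⊆ V(G). Let H be a connected component of G - X that is a d-quasi-forest (has a feedback vertex set of size at most d), and let X_I ⊆ X be an independent set of G with conf_H(X_I) > 0. Then there exists X' ⊆ X_I with |X'| ≤ d + 2 and conf_H(X') > 0. -/
attribute [local instance] Classical.propDecidable

namespace VCKernel

variable {V : Type*} [Fintype V] [DecidableEq V]

theorem indep_le (G : SimpleGraph V) (A : Set V) (S : Finset V) (h : ↑S ⊆ A) (hi : IsIndep G S) :
    S.card ≤ alphaOn G A := by
  apply le_csSup
  · refine ⟨Fintype.card V, ?_⟩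
    rintro n ⟨S, _, _, rfl⟩
    exact Finset.card_le_univ S
  · exact ⟨S, h, hi, rfl⟩

theorem indep_ex (G : SimpleGraph V) (A : Set V) :
    ∃ S : Finset V, ↑S ⊆ A ∧ IsIndep G S ∧ S.card = alphaOn G A := by
  have := Nat.sSup_mem (s := {n | ∃ S : Finset V, ↑S ⊆ A ∧ IsIndep G S ∧ S.card = n})
    ⟨0, ∅, by simp, by simp [IsIndep], rfl⟩ ⟨Fintype.card V, by
      rintro n ⟨S, _, _, rfl⟩
      exact Finset.card_le_univ S⟩
  exact this

theorem alphaOn_mono (G : SimpleGraph V) {A B : Set V} (h : A ⊆ B) :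
    alphaOn G A ≤ alphaOn G B := by
  obtain ⟨S, h1, h2, h3⟩ := indep_ex G A
  rw [← h3]
  exact indep_le G B S (h1.trans h) h2

/-- bi-independent pair inside `A` -/
def BI (G : SimpleGraph V) (A L R : Finset V) : Prop :=
  L ⊆ A ∧ R ⊆ A ∧ ∀ u ∈ L, ∀ v ∈ R, ¬ G.Adj u v

noncomputable def lam (G : SimpleGraph V) (A : Finset V) : ℕ :=
  sSup {n | ∃ L R : Finset V, BI G A L R ∧ L.card + R.card = n}

theorem lam_bdd (G : SimpleGraph V) (A : Finset V) :
    BddAbove {n | ∃ L R : Finset V, BI G A L R ∧ L.card + R.card = n} := by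
  refine ⟨Fintype.card V + Fintype.card V, ?_⟩
  rintro n ⟨L, R, _, rfl⟩
  exact add_le_add (Finset.card_le_univ L) (Finset.card_le_univ R)

theorem le_lam {G : SimpleGraph V} {A L R : Finset V} (h : BI G A L R) :
    L.card + R.card ≤ lam G A :=
  le_csSup (lam_bdd G A) ⟨L, R, h, rfl⟩

theorem lam_ex (G : SimpleGraph V) (A : Finset V) :
    ∃ L R : Finset V, BI G A L R ∧ L.card + R.card = lam G A :=
  Nat.sSup_mem (s := {n | ∃ L R : Finset V, BI G A L R ∧ L.card + R.card = n})
    ⟨0, ∅, ∅, by simp [BI], rfl⟩ (lam_bdd G A)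

theorem BI.symm {G : SimpleGraph V} {A L R : Finset V} (h : BI G A L R) : BI G A R L :=
  ⟨h.2.1, h.1, fun u hu v hv ha => h.2.2 v hv u hu ha.symm⟩

/-- majority -/
def maj (a b c : Finset V) : Finset V := (a ∩ b) ∪ (c ∩ (a ∪ b))

theorem mem_maj {a b c : Finset V} {v : V} :
    v ∈ maj a b c ↔ (v ∈ a ∧ v ∈ b) ∨ (v ∈ c ∧ (v ∈ a ∨ v ∈ b)) := by
  simp [maj]

theorem card_maj (a b c : Finset V) :
    a.card + b.card + c.card = (maj a b c).card + (a ∪ b ∪ c).card + (a ∩ b ∩ c).card := by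
  have h1 := Finset.card_union_add_card_inter a b
  have h2 := Finset.card_union_add_card_inter (a ∪ b) c
  have h3 := Finset.card_union_add_card_inter (a ∩ b) (c ∩ (a ∪ b))
  have h4 : (a ∩ b) ∩ (c ∩ (a ∪ b)) = a ∩ b ∩ c := by
    ext v; simp; tauto
  rw [h4] at h3
  rw [Finset.inter_comm (a ∪ b) c] at h2
  unfold maj
  omega

theorem BI.maj {G : SimpleGraph V} {A L1 R1 L2 R2 L3 R3 : Finset V}
    (h1 : BI G A L1 R1) (h2 : BI G A L2 R2) (h3 : BI G A L3 R3) :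
    BI G A (maj L1 L2 L3) (maj R1 R2 R3) ∧
    (L1.card + R1.card) + (L2.card + R2.card) + (L3.card + R3.card) ≤
      ((VCKernel.maj L1 L2 L3).card + (VCKernel.maj R1 R2 R3).card) + 2 * lam G A := by
  obtain ⟨a1, b1, c1⟩ := h1
  obtain ⟨a2, b2, c2⟩ := h2
  obtain ⟨a3, b3, c3⟩ := h3
  refine ⟨⟨?_, ?_, ?_⟩, ?_⟩
  · intro v hv
    rw [mem_maj] at hv
    have := @a1 v; have := @a2 v; have := @a3 v
    tauto
  · intro v hv
    rw [mem_maj] at hv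
    have := @b1 v; have := @b2 v; have := @b3 v
    tauto
  · intro u hu v hv
    rw [mem_maj] at hu hv
    have := c1 u; have := c2 u; have := c3 u
    have := fun h => c1 u h v; have := fun h => c2 u h v; have := fun h => c3 u h v
    tauto
  · have hA : BI G A (L1 ∪ L2 ∪ L3) (R1 ∩ R2 ∩ R3) := by
      refine ⟨Finset.union_subset (Finset.union_subset a1 a2) a3,
        fun v hv => b1 (by simp at hv; tauto), ?_⟩
      intro u hu v hv
      simp at hu hv
      have := fun h => c1 u h v; have := fun h => c2 u h v; have := fun h => c3 u h v
      tauto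
    have hB : BI G A (L1 ∩ L2 ∩ L3) (R1 ∪ R2 ∪ R3) := by
      refine ⟨fun v hv => a1 (by simp at hv; tauto),
        Finset.union_subset (Finset.union_subset b1 b2) b3, ?_⟩
      intro u hu v hv
      simp at hu hv
      have := fun h => c1 u h v; have := fun h => c2 u h v; have := fun h => c3 u h v
      tauto
    have := le_lam hA
    have := le_lam hB
    have := card_maj L1 L2 L3
    have := card_maj R1 R2 R3
    omega

theorem BI.mono {G : SimpleGraph V} {A B L R : Finset V} (h : BI G A L R) (hAB : A ⊆ B) :
    BI G B L R := ⟨h.1.trans hAB, h.2.1.trans hAB, h.2.2⟩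

/-- Nemhauser-Trotter -/
theorem nt (G : SimpleGraph V) (A Y : Finset V) (h : lam G A ≤ lam G (A \ Y)) :
    alphaOn G (↑A) ≤ alphaOn G (↑(A \ Y) : Set V) := by
  obtain ⟨L, R, hB, hc⟩ := lam_ex G (A \ Y)
  obtain ⟨I, hI, hind, hIc⟩ := indep_ex G (↑A : Set V)
  have hII : BI G A I I := ⟨by exact_mod_cast hI, by exact_mod_cast hI, hind⟩
  have hB' := hB.mono Finset.sdiff_subset
  obtain ⟨h1, h2⟩ := BI.maj hB' hB'.symm hII
  have hcomm : VCKernel.maj R L I = VCKernel.maj L R I := by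
    unfold VCKernel.maj; rw [Finset.inter_comm R L, Finset.union_comm R L]
  rw [hcomm] at h1 h2
  have h3 := indep_le G (↑(A \ Y) : Set V) (VCKernel.maj L R I) (by
    intro v hv
    have hv := mem_maj.1 (Finset.mem_coe.1 hv)
    have := @hB.1 v; have := @hB.2.1 v
    exact Finset.mem_coe.2 (by tauto)) h1.2.2
  omega

theorem two_alpha_le (G : SimpleGraph V) (A : Finset V) : 2 * alphaOn G (↑A) ≤ lam G A := by
  obtain ⟨I, hI, hind, hIc⟩ := indep_ex G (↑A : Set V)
  have := le_lam (G := G) (A := A) (L := I) (R := I)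
    ⟨by exact_mod_cast hI, by exact_mod_cast hI, hind⟩
  omega

/-- uncrossing for pairs -/
theorem pair_lem (G : SimpleGraph V) (A : Finset V) (y y' : V)
    (h1 : lam G A ≤ lam G (A \ {y})) (h2 : lam G A ≤ lam G (A \ {y'}))
    (h3 : lam G A ≤ lam G (A \ {y, y'}) + 1) : lam G A ≤ lam G (A \ {y, y'}) := by
  obtain ⟨L1, R1, hB1, hc1⟩ := lam_ex G (A \ {y})
  obtain ⟨L2, R2, hB2, hc2⟩ := lam_ex G (A \ {y'})
  obtain ⟨L, R, hB, hc⟩ := lam_ex G (A \ {y, y'})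
  have key : ∃ P Q : Finset V, BI G A P Q ∧ lam G A ≤ P.card + Q.card ∧
      y ∉ P ∧ y' ∉ P ∧ y' ∉ Q := by
    obtain ⟨a, b, c⟩ := hB
    obtain ⟨a2, b2, c2⟩ := hB2
    have hA : BI G A (L ∩ L2) (R ∪ R2) := by
      refine ⟨fun v hv => ?_, fun v hv => ?_, ?_⟩
      · have := @a v; simp at *; tauto
      · have := @b v; have := @b2 v; simp at *; tauto
      · intro u hu v hv
        have := fun h => c u h v; have := fun h => c2 u h v
        simp at hu hv; tauto
    have hB : BI G A (L ∪ L2) (R ∩ R2) := by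
      refine ⟨fun v hv => ?_, fun v hv => ?_, ?_⟩
      · have := @a v; have := @a2 v; simp at *; tauto
      · have := @b v; simp at *; tauto
      · intro u hu v hv
        have := fun h => c u h v; have := fun h => c2 u h v
        simp at hu hv; tauto
    have e1 := Finset.card_union_add_card_inter L L2
    have e2 := Finset.card_union_add_card_inter R R2
    have f1 := @a y; have f2 := @a y'; have f3 := @b y; have f4 := @b y'
    have f5 := @a2 y'; have f6 := @b2 y'
    simp at f1 f2 f3 f4 f5 f6
    by_cases hh : lam G A ≤ (L ∩ L2).card + (R ∪ R2).card
    · exact ⟨_, _, hA, hh, by simp; tauto, by simp; tauto, by simp; tauto⟩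
    · exact ⟨_, _, hB.symm, by omega, by simp; tauto, by simp; tauto, by simp; tauto⟩
  obtain ⟨P, Q, hPQ, hcard, n1, n2, n3⟩ := key
  obtain ⟨m1, m2⟩ := BI.maj hPQ hPQ.symm (hB1.mono Finset.sdiff_subset)
  have f1 := @hB1.1 y; have f2 := @hB1.2.1 y
  simp at f1 f2
  have hle : BI G (A \ {y, y'}) (maj P Q L1) (maj Q P R1) := by
    refine ⟨fun v hv => ?_, fun v hv => ?_, m1.2.2⟩
    · have hA := m1.1 hv
      rw [mem_maj] at hv
      simp only [Finset.mem_sdiff, Finset.mem_insert, Finset.mem_singleton]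
      refine ⟨hA, ?_⟩
      rintro (rfl | rfl) <;> tauto
    · have hA := m1.2.1 hv
      rw [mem_maj] at hv
      simp only [Finset.mem_sdiff, Finset.mem_insert, Finset.mem_singleton]
      refine ⟨hA, ?_⟩
      rintro (rfl | rfl) <;> tauto
  have := le_lam hle
  omega

theorem helly (G : SimpleGraph V) (A Y : Finset V)
    (h : ∀ Y1 ⊆ Y, Y1.card ≤ 2 → lam G A ≤ lam G (A \ Y1)) : lam G A ≤ lam G (A \ Y) := by
  induction hn : Y.card using Nat.strong_induction_on generalizing Y with
  | _ n ih =>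
  by_cases h2 : Y.card ≤ 2
  · exact h Y subset_rfl h2
  obtain ⟨a, ha, b, hb, c, hc, hab, hac, hbc⟩ := Finset.two_lt_card.1 (not_le.1 h2)
  have er : ∀ x ∈ Y, lam G A ≤ lam G (A \ Y.erase x) := fun x hx =>
    ih _ (hn ▸ Finset.card_erase_lt_of_mem hx) _
      (fun Y1 h1 => h Y1 (h1.trans (Finset.erase_subset _ _))) rfl
  obtain ⟨L1, R1, hB1, hc1⟩ := lam_ex G (A \ Y.erase a)
  obtain ⟨L2, R2, hB2, hc2⟩ := lam_ex G (A \ Y.erase b)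
  obtain ⟨L3, R3, hB3, hc3⟩ := lam_ex G (A \ Y.erase c)
  have := er a ha; have := er b hb; have := er c hc
  obtain ⟨m1, m2⟩ := BI.maj (hB1.mono Finset.sdiff_subset) (hB2.mono Finset.sdiff_subset)
    (hB3.mono Finset.sdiff_subset)
  have hle : BI G (A \ Y) (maj L1 L2 L3) (maj R1 R2 R3) := by
    refine ⟨fun v hv => ?_, fun v hv => ?_, m1.2.2⟩
    · rw [mem_maj] at hv
      have g1 := @hB1.1 v; have g2 := @hB2.1 v; have g3 := @hB3.1 v
      simp only [Finset.mem_sdiff, Finset.mem_erase] at g1 g2 g3 ⊢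
      grind
    · rw [mem_maj] at hv
      have g1 := @hB1.2.1 v; have g2 := @hB2.2.1 v; have g3 := @hB3.2.1 v
      simp only [Finset.mem_sdiff, Finset.mem_erase] at g1 g2 g3 ⊢
      grind
  have := le_lam hle
  omega

theorem drop_lem (G : SimpleGraph V) (A Y : Finset V) (h : lam G (A \ Y) < lam G A) :
    ∃ Y1 ⊆ Y, 1 ≤ Y1.card ∧ Y1.card ≤ 2 ∧ lam G (A \ Y1) + Y1.card ≤ lam G A := by
  by_contra hcon
  push Not at hcon
  have single : ∀ y ∈ Y, lam G A ≤ lam G (A \ {y}) := by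
    intro y hy
    have := hcon {y} (by simpa using hy) (by simp) (by simp)
    simp at this; omega
  refine absurd (helly G A Y ?_) (not_le.2 h)
  intro Y1 hY1 hc
  have hc' : Y1.card = 0 ∨ Y1.card = 1 ∨ Y1.card = 2 := by omega
  rcases hc' with h0 | h0 | h0
  · rw [Finset.card_eq_zero] at h0; subst h0; simp
  · obtain ⟨y, rfl⟩ := Finset.card_eq_one.1 h0
    exact single y (by simpa using hY1)
  · have := hcon Y1 hY1 (by omega) hc
    obtain ⟨y, y', hne, rfl⟩ := Finset.card_eq_two.1 h0
    exact pair_lem G A y y' (single y (hY1 (by simp))) (single y' (hY1 (by simp))) (by omega)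

theorem block_lem (G : SimpleGraph V) (a : ℕ) (Y : Finset V) (n : ℕ) : ∀ A : Finset V,
    lam G A ≤ 2 * a + n → alphaOn G (↑(A \ Y) : Set V) < a →
    ∃ Y' ⊆ Y, Y'.card ≤ n + 2 ∧ alphaOn G (↑(A \ Y') : Set V) < a := by
  induction n using Nat.strong_induction_on with
  | _ n ih =>
  intro A hl hY
  by_cases h0 : alphaOn G (↑A : Set V) < a
  · exact ⟨∅, by simp, by simp, by simpa using h0⟩
  have hlt : lam G (A \ Y) < lam G A := by
    by_contra hh
    have := nt G A Y (not_lt.1 hh)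
    omega
  obtain ⟨Y1, hs, hp, h2, hd⟩ := drop_lem G A Y hlt
  by_cases hn : Y1.card ≤ n
  · obtain ⟨Y2, hs2, hc2, hb⟩ := ih (n - Y1.card) (by omega) (A \ Y1) (by omega)
      (lt_of_le_of_lt (alphaOn_mono G (by
        intro v hv; simp at *; tauto)) hY)
    refine ⟨Y1 ∪ Y2, Finset.union_subset hs hs2, ?_, ?_⟩
    · have := Finset.card_union_le Y1 Y2
      omega
    · rwa [sdiff_sdiff_left] at hb
  · refine ⟨Y1, hs, by omega, ?_⟩
    have := two_alpha_le G (A \ Y1)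
    omega

theorem lam_fvs (G : SimpleGraph V) (A Z : Finset V) (f : V → Bool)
    (hf : ∀ u ∈ A, ∀ v ∈ A, u ∉ Z → v ∉ Z → G.Adj u v → f u ≠ f v) :
    lam G A ≤ 2 * alphaOn G (↑A) + Z.card := by
  obtain ⟨L, R, ⟨hL, hR, hLR⟩, hc⟩ := lam_ex G A
  let J : Bool → Finset V := fun b =>
    A.filter (fun v => (v ∈ L ∧ v ∈ R) ∨ (v ∉ Z ∧ ((v ∈ L ∧ f v = b) ∨ (v ∈ R ∧ f v = !b))))
  have hJ : ∀ b, (J b).card ≤ alphaOn G (↑A : Set V) := by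
    intro b
    refine indep_le G _ _ (Finset.coe_subset.2 (Finset.filter_subset _ _)) ?_
    intro u hu v hv hadj
    simp only [J, Finset.mem_filter] at hu hv
    have h1 := hf u hu.1 v hv.1
    have h2 := fun h h' => hLR u h v h' hadj
    have h3 := fun h h' => hLR v h u h' hadj.symm
    grind
  have h1 := hJ true
  have h2 := hJ false
  have h3 : L.card + R.card ≤ (J true).card + (J false).card + Z.card := by
    have e1 := Finset.card_union_add_card_inter L R
    have e2 := Finset.card_union_add_card_inter (J true) (J false)
    have i1 : L ∩ R ⊆ J true ∩ J false := by
      intro v hv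
      have := @hL v
      simp [J] at *; tauto
    have i2 : L ∪ R ⊆ (J true ∪ J false) ∪ Z := by
      intro v hv
      have := @hL v; have := @hR v
      simp [J] at *
      cases f v <;> simp <;> tauto
    have := Finset.card_le_card i1
    have := Finset.card_le_card i2
    have := Finset.card_union_le (J true ∪ J false) Z
    omega
  omega

/-- If a connected component `C` of `G - X` has a feedback vertex set of size
at most `d` and an independent set `X_I ⊆ X` has `conf_C(X_I) > 0`, then some
`X' ⊆ X_I` with `|X'| ≤ d + 2` has `conf_C(X') > 0`. -/
theorem stmt16 (G : SimpleGraph V) (X : Finset V) (C : Set V)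
    (hC : IsCompOf G (Set.univ \ ↑X) C) (d : ℕ)
    (hfvs : ∃ Z : Finset V, Z.card ≤ d ∧ (G.induce (C \ ↑Z)).IsAcyclic)
    (XI : Finset V) (hXI : XI ⊆ X) (hind : IsIndep G XI)
    (hconf : 0 < conf G C XI) :
    ∃ X' ⊆ XI, X'.card ≤ d + 2 ∧ 0 < conf G C X' := by
  obtain ⟨Z, hZ, hac⟩ := hfvs
  obtain ⟨col⟩ := hac.colorable_two
  have hconf' : alphaOn G (C \ nbhd G XI) < alphaOn G C := by
    unfold conf at hconf; omega
  let A : Finset V := Finset.univ.filter (fun v => v ∈ C)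
  have hA : (↑A : Set V) = C := by ext v; simp [A]
  let Y : Finset V := Finset.univ.filter (fun v => v ∈ nbhd G XI)
  have hl : lam G A ≤ 2 * alphaOn G C + d := by
    have := lam_fvs G A Z
      (fun v => if h : v ∈ C \ (↑Z : Set V) then decide (col ⟨v, h⟩ = 0) else true) (by
        intro u hu v hv hu' hv' hadj
        have h1 : u ∈ C \ (↑Z : Set V) := ⟨by simpa [A] using hu, by simpa using hu'⟩
        have h2 : v ∈ C \ (↑Z : Set V) := ⟨by simpa [A] using hv, by simpa using hv'⟩
        have hne : col ⟨u, h1⟩ ≠ col ⟨v, h2⟩ := col.valid (by simpa using hadj)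
        rw [dif_pos h1, dif_pos h2]
        intro he
        rw [decide_eq_decide] at he
        omega)
    rw [hA] at this
    omega
  obtain ⟨Y', hs, hcard, hb⟩ := block_lem G (alphaOn G C) Y d A hl (by
    refine lt_of_le_of_lt (alphaOn_mono G ?_) hconf'
    intro v hv
    simpa [A, Y] using hv)
  have hex : ∀ y ∈ Y', ∃ u ∈ XI, G.Adj u y := by
    intro y hy
    exact (Finset.mem_filter.1 (hs hy)).2
  choose! g hg1 hg2 using hex
  refine ⟨Y'.image g, ?_, Finset.card_image_le.trans hcard, ?_⟩
  · intro u hu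
    obtain ⟨y, hy, rfl⟩ := Finset.mem_image.1 hu
    exact hg1 y hy
  · have : alphaOn G (C \ nbhd G (Y'.image g)) ≤ alphaOn G (↑(A \ Y') : Set V) := by
      apply alphaOn_mono
      rintro v ⟨hv, hn⟩
      have : v ∉ Y' := fun h => hn ⟨g v, Finset.mem_image_of_mem g h, hg2 v h⟩
      simpa [A] using ⟨hv, this⟩
    unfold conf
    omega

end VCKernel
end
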